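/- arXiv:2003.11416 — 2 statements merged into one kernel-verified Lean document; each statement's English description precedes it below -/
import Mathlib

section
/- In the valuation setting below, let δ = δ_α be a threshold coloring for some α ∈ ℤ. Suppose G contains a 3-cycle (u₁, u₂, u₃) and a 4-cycle (v₁, v₂, v₃, v₄) whose seven edges u₁u₂, u₂u₃, u₁u₃, v₁v₂, v₂v₃, v₃v₄, v₁v₄ are all blue under δ; suppose u₁ and v₁ are equal or joined by a path all of whose edges are red, u₃ and v₃ are joined by a path all of whose edges are red, and u₂, v₂ and v₄ all lie in one connected subgraph of G all of whose edges are red. Assume moreover the triangle inequalities λ(u₁u₂) ≤ λ(u₁u₃) + λ(u₂u₃), λ(u₁u₃) ≤ λ(u₁u₂) + λ(u₂u₃), λ(u₂u₃) ≤ λ(u₁u₂) + λ(u₁u₃). Then either one of these three inequalities is an equality (the triangle is degenerate), or λ(v₁v₂) = λ(v₁v₄) and λ(v₂v₃) = λ(v₃v₄). -/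
noncomputable section

/-- `W_{u,v} = (x_v − x_u) + i(y_v − y_u)`, computed in a field `F` containing `ℂ`. -/
def Wmap {V F : Type*} [Field F] (ι : ℂ →+* F) (x y : V → F) (u v : V) : F :=
  (x v - x u) + ι Complex.I * (y v - y u)

/-!
In the isotropic coordinates `w = x + iy`, `z = x - iy` an edge of length `λ` satisfies
`Δw * Δz = λ ^ 2`. Write `c` for the ratio `Δw₁₂ / Δw₁₃` in the triangle. Eliminating `z` gives
`λ₁₂² / c + λ₂₃² / (1 - c) = λ₁₃²`, so `c` is algebraic over `ℂ` and hence a complex constant; its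
quadratic has discriminant `-16 Area²` (Heron), so `c` is not real when the triangle is
nondegenerate.

Red paths do not change `Δw / Δw₁₃` modulo the maximal ideal of the valuation, so the edges of the
4-cycle at `v₁` have residue `c` and those at `v₃` have residue `1 - c`. The increments of `z` along
the 4-cycle sum to zero; multiplied by `Δw₁₃` and reduced to the residue field, this relation reads
`(μ₁₂² - μ₁₄²) / c + (μ₂₃² - μ₄₃²) / (1 - c) = 0`, where `μ` denotes the lengths of the 4-cycle.
Since `c` is not real, both numerators vanish.
-/

section Valuation

variable {R F K Γ Γ₀ : Type*}

/-- The additive valuation with values in `WithTop Γ` extending a valuation `ν : Fˣ → Γ`, which is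
encoded as a function on all of `F` whose value at `0` is irrelevant. -/
def addValuationOfFun [Field F] [AddCommGroup Γ] [LinearOrder Γ] [IsOrderedAddMonoid Γ] (ν : F → Γ)
    (map_mul : ∀ a b : F, a ≠ 0 → b ≠ 0 → ν (a * b) = ν a + ν b)
    (map_add : ∀ a b : F, a ≠ 0 → b ≠ 0 → a + b ≠ 0 → min (ν a) (ν b) ≤ ν (a + b)) :
    AddValuation F (WithTop Γ) :=
  open Classical in
  AddValuation.of (fun a ↦ if a = 0 then ⊤ else (ν a : WithTop Γ))
    (if_pos rfl)
    (by
      have h : ν 1 = ν 1 + ν 1 := by simpa using map_mul 1 1 one_ne_zero one_ne_zero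
      simpa using h)
    (fun a b ↦ by
      by_cases ha : a = 0
      · rw [ha, zero_add]
        exact min_le_right _ _
      by_cases hb : b = 0
      · rw [hb, add_zero]
        exact min_le_left _ _
      by_cases hab : a + b = 0
      · simp [hab]
      simpa only [if_neg ha, if_neg hb, if_neg hab] using mod_cast map_add a b ha hb hab)
    (fun a b ↦ by
      by_cases ha : a = 0
      · simp [ha]
      by_cases hb : b = 0
      · simp [hb]
      simp only [if_neg ha, if_neg hb, if_neg (mul_ne_zero ha hb), map_mul a b ha hb,
        WithTop.coe_add])

section addValuationOfFun

variable [Field F] [AddCommGroup Γ] [LinearOrder Γ] [IsOrderedAddMonoid Γ] {ν : F → Γ}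
  {map_mul : ∀ a b : F, a ≠ 0 → b ≠ 0 → ν (a * b) = ν a + ν b}
  {map_add : ∀ a b : F, a ≠ 0 → b ≠ 0 → a + b ≠ 0 → min (ν a) (ν b) ≤ ν (a + b)}

theorem addValuationOfFun_of_ne_zero {a : F} (ha : a ≠ 0) :
    addValuationOfFun ν map_mul map_add a = ν a :=
  if_neg ha

theorem coe_lt_addValuationOfFun {a : F} {α : Γ} (h : α < ν a) :
    (α : WithTop Γ) < addValuationOfFun ν map_mul map_add a := by
  by_cases ha : a = 0
  · rw [ha, AddValuation.map_zero]
    exact WithTop.coe_lt_top α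
  · rw [addValuationOfFun_of_ne_zero ha]
    exact mod_cast h

end addValuationOfFun

theorem lt_map_sub_of_walk [Ring R] [LinearOrderedAddCommMonoidWithTop Γ₀] (v : AddValuation R Γ₀)
    {V : Type*} {G : SimpleGraph V} (f : V → R) {α : Γ₀} (hα : α ≠ ⊤) {a b : V} (P : G.Walk a b)
    (hP : ∀ u u', s(u, u') ∈ P.edges → α < v (f u' - f u)) : α < v (f b - f a) := by
  induction P with
  | nil => simpa [lt_top_iff_ne_top] using hα
  | @cons a a' b _ Q ih =>
    have hhead : α < v (f a' - f a) := hP a a' (by simp)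
    have htail : α < v (f b - f a') := ih fun u u' hu ↦ hP u u' (by simp [hu])
    simpa using v.map_lt_add htail hhead

theorem eq_zero_of_zero_lt_map [Ring K] [Ring R] [LinearOrderedAddCommMonoidWithTop Γ₀]
    (v : AddValuation R Γ₀) (ι : K →+* R) (hv : ∀ c, c ≠ 0 → v (ι c) = 0) {c : K}
    (hc : 0 < v (ι c)) : c = 0 := by
  by_contra h
  exact hc.ne' (hv c h)

theorem sum_mul_eq_zero_of_residue [Ring K] [Ring R] [LinearOrderedAddCommGroupWithTop Γ₀]
    (v : AddValuation R Γ₀) (ι : K →+* R) (hv : ∀ c, c ≠ 0 → v (ι c) = 0) {κ : Type*}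
    (s : Finset κ) (A c : κ → K) (a : κ → R) (ha : ∀ i ∈ s, 0 < v (a i - ι (c i)))
    (hsum : ∑ i ∈ s, ι (A i) * a i = 0) : ∑ i ∈ s, A i * c i = 0 := by
  apply eq_zero_of_zero_lt_map v ι hv
  have hterm : ∀ i ∈ s, 0 < v (ι (A i) * (a i - ι (c i))) := fun i hi ↦ by
    by_cases hA : A i = 0
    · simp [hA]
    · simpa [hv _ hA] using ha i hi
  have hlt := v.map_lt_sum LinearOrderedAddCommGroupWithTop.zero_ne_top hterm
  simp only [mul_sub, Finset.sum_sub_distrib, hsum, zero_sub, AddValuation.map_neg] at hlt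
  simpa using hlt

variable [Field F] [LinearOrderedAddCommGroupWithTop Γ₀] (v : AddValuation F Γ₀)

theorem zero_lt_map_inv_sub_inv {a b : F} (hb : v b = 0) (hab : 0 < v (a - b)) :
    0 < v (a⁻¹ - b⁻¹) := by
  have ha : v a = 0 := hb ▸ v.map_eq_of_lt_sub (hb.symm ▸ hab)
  have ha₀ : a ≠ 0 := v.ne_top_iff.mp (by simp [ha])
  have hb₀ : b ≠ 0 := v.ne_top_iff.mp (by simp [hb])
  rw [inv_sub_inv ha₀ hb₀, AddValuation.map_div, AddValuation.map_mul, ha, hb, add_zero, sub_zero,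
    v.map_sub_swap]
  exact hab

theorem zero_lt_map_div_sub_div {p q p' q' d : F} (hp : v d < v (p' - p))
    (hq : v d < v (q' - q)) : 0 < v ((q' - p') / d - (q - p) / d) := by
  rw [← sub_div, AddValuation.map_div, LinearOrderedAddCommGroupWithTop.sub_pos]
  left
  rw [show q' - p' - (q - p) = q' - q + -(p' - p) by ring]
  exact v.map_lt_add hq (by rwa [AddValuation.map_neg])

end Valuation

section Triangle

theorem exists_map_eq_of_quadratic_eq_zero {K F : Type*} [Field K] [IsAlgClosed K] [Field F]
    (ι : K →+* F) {a b c : K} (ha : a ≠ 0) {t : F}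
    (ht : ι a * t ^ 2 + ι b * t + ι c = 0) : ∃ s, ι s = t := by
  open Polynomial in
  have hp : (C a * X ^ 2 + C b * X + C c : K[X]) ≠ 0 := fun h ↦
    ha (by simpa [h] using (leadingCoeff_quadratic (b := b) (c := c) ha).symm)
  exact (IsAlgClosed.splits _).mem_range_of_isRoot hp (by simpa using ht)

theorem heron_discrim_neg {p q r : ℝ} (hp : p < r + q) (hq : q < p + r) (hr : r < p + q) :
    discrim (r ^ 2) (q ^ 2 - p ^ 2 - r ^ 2) (p ^ 2) < 0 := by
  have heron : discrim (r ^ 2) (q ^ 2 - p ^ 2 - r ^ 2) (p ^ 2)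
      = -((p + q + r) * (r + q - p) * (p + r - q) * (p + q - r)) := by
    rw [discrim]; ring
  have h₀ : 0 < p + q + r := by linarith
  rw [heron, neg_lt_zero]
  have := sub_pos.mpr hp
  have := sub_pos.mpr hq
  have := sub_pos.mpr hr
  positivity

theorem im_ne_zero_of_triangle {p q r : ℝ} (hp : p < r + q) (hq : q < p + r) (hr : r < p + q)
    {c : ℂ} (hc : (r : ℂ) ^ 2 * c ^ 2 + ((q : ℂ) ^ 2 - p ^ 2 - r ^ 2) * c + (p : ℂ) ^ 2 = 0) :
    c.im ≠ 0 := by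
  intro him
  lift c to ℝ using him
  have hroot : r ^ 2 * (c * c) + (q ^ 2 - p ^ 2 - r ^ 2) * c + p ^ 2 = 0 := by
    rw [← sq]
    exact mod_cast hc
  have hdisc := heron_discrim_neg hp hq hr
  rw [discrim_eq_sq_of_quadratic_eq_zero hroot] at hdisc
  exact hdisc.not_ge (sq_nonneg _)

theorem exists_nonreal_ratio_of_triangle {F : Type*} [Field F] (ι : ℂ →+* F)
    {w₁ w₂ w₃ z₁ z₂ z₃ : F} {p q r : ℝ}
    (h₁₂ : (w₂ - w₁) * (z₂ - z₁) = ι p ^ 2) (h₂₃ : (w₃ - w₂) * (z₃ - z₂) = ι q ^ 2)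
    (h₁₃ : (w₃ - w₁) * (z₃ - z₁) = ι r ^ 2)
    (hp : p < r + q) (hq : q < p + r) (hr : r < p + q) :
    ∃ c : ℂ, c.im ≠ 0 ∧ (w₂ - w₁) / (w₃ - w₁) = ι c ∧ (w₃ - w₂) / (w₃ - w₁) = ι (1 - c) := by
  have hr₀ : (r : ℂ) ≠ 0 := by
    have : 0 < r := by linarith
    exact mod_cast this.ne'
  have hw : w₃ - w₁ ≠ 0 :=
    left_ne_zero_of_mul (h₁₃ ▸ pow_ne_zero 2 ((map_ne_zero ι).mpr hr₀))
  set t := (w₂ - w₁) / (w₃ - w₁) with ht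
  have hquad : ι ((r : ℂ) ^ 2) * t ^ 2 + ι ((q : ℂ) ^ 2 - p ^ 2 - r ^ 2) * t + ι ((p : ℂ) ^ 2)
      = 0 := by
    simp only [map_sub, map_pow, ← h₁₂, ← h₂₃, ← h₁₃, ht]
    field_simp
    ring
  obtain ⟨c, hc⟩ := exists_map_eq_of_quadratic_eq_zero ι (pow_ne_zero 2 hr₀) hquad
  refine ⟨c, im_ne_zero_of_triangle hp hq hr (ι.injective ?_), hc.symm, ?_⟩
  · rw [← hc] at hquad
    simpa only [map_add, map_mul, map_pow, map_zero] using hquad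
  · rw [map_sub, map_one, hc, ht]
    field_simp
    ring

end Triangle

section FourCycle

theorem eq_zero_and_eq_zero_of_div_add_div_one_sub {A B : ℝ} {c : ℂ} (hc : c.im ≠ 0)
    (h : A / c + B / (1 - c) = 0) : A = 0 ∧ B = 0 := by
  have hc₀ : c ≠ 0 := fun h ↦ hc (by simp [h])
  have hc₁ : 1 - c ≠ 0 := fun h ↦ hc (by simp [← sub_eq_zero.mp h])
  rw [div_add_div _ _ hc₀ hc₁, div_eq_zero_iff, or_iff_left (mul_ne_zero hc₀ hc₁)] at h
  have him : (B - A) * c.im = 0 := by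
    linear_combination (by simpa using congrArg Complex.im h : _ = _)
  have hBA : B = A := sub_eq_zero.mp ((mul_eq_zero.mp him).resolve_right hc)
  subst hBA
  have hB : B = 0 := by
    have h' : (B : ℂ) = 0 := by linear_combination h
    exact mod_cast h'
  exact ⟨hB, hB⟩

theorem sum_div_eq_zero_of_residue_ratio {F Γ₀ K : Type*} [Field F] [Field K]
    [LinearOrderedAddCommGroupWithTop Γ₀] (v : AddValuation F Γ₀) (ι : K →+* F)
    (hv : ∀ c, c ≠ 0 → v (ι c) = 0) {κ : Type*} (s : Finset κ) (A c : κ → K) (Δw Δz : κ → F)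
    {d : F} (hA : ∀ i ∈ s, Δw i * Δz i = ι (A i)) (hc : ∀ i ∈ s, c i ≠ 0)
    (hres : ∀ i ∈ s, 0 < v (Δw i / d - ι (c i))) (hsum : ∑ i ∈ s, Δz i = 0) :
    ∑ i ∈ s, A i / c i = 0 := by
  have hinv : ∀ i ∈ s, 0 < v ((Δw i / d)⁻¹ - ι (c i)⁻¹) := fun i hi ↦ by
    rw [map_inv₀]
    exact zero_lt_map_inv_sub_inv v (hv _ (hc i hi)) (hres i hi)
  have hterm : ∀ i ∈ s, ι (A i) * (Δw i / d)⁻¹ = Δz i * d := fun i hi ↦ by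
    have hΔw : Δw i ≠ 0 := fun h ↦
      hc i hi (eq_zero_of_zero_lt_map v ι hv (by simpa [h] using hres i hi))
    rw [← hA i hi, inv_div]
    field_simp
  simp only [div_eq_mul_inv]
  refine sum_mul_eq_zero_of_residue v ι hv s A (fun i ↦ (c i)⁻¹) _ hinv ?_
  rw [Finset.sum_congr rfl hterm, ← Finset.sum_mul, hsum, zero_mul]

theorem deltoid_of_residue_ratio {F Γ₀ : Type*} [Field F] [LinearOrderedAddCommGroupWithTop Γ₀]
    (v : AddValuation F Γ₀) (ι : ℂ →+* F) (hv : ∀ c, c ≠ 0 → v (ι c) = 0)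
    {w₁ w₂ w₃ w₄ z₁ z₂ z₃ z₄ d : F} {p₂ q₂ p₄ q₄ : ℝ} {c : ℂ}
    (hp₂ : 0 ≤ p₂) (hq₂ : 0 ≤ q₂) (hp₄ : 0 ≤ p₄) (hq₄ : 0 ≤ q₄)
    (h₁₂ : (w₂ - w₁) * (z₂ - z₁) = ι p₂ ^ 2) (h₂₃ : (w₃ - w₂) * (z₃ - z₂) = ι q₂ ^ 2)
    (h₁₄ : (w₄ - w₁) * (z₄ - z₁) = ι p₄ ^ 2) (h₄₃ : (w₃ - w₄) * (z₃ - z₄) = ι q₄ ^ 2)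
    (hc : c.im ≠ 0)
    (r₁₂ : 0 < v ((w₂ - w₁) / d - ι c)) (r₂₃ : 0 < v ((w₃ - w₂) / d - ι (1 - c)))
    (r₁₄ : 0 < v ((w₄ - w₁) / d - ι c)) (r₄₃ : 0 < v ((w₃ - w₄) / d - ι (1 - c))) :
    p₂ = p₄ ∧ q₂ = q₄ := by
  have hc₀ : c ≠ 0 := fun h ↦ hc (by simp [h])
  have hc₁ : 1 - c ≠ 0 := fun h ↦ hc (by simp [← sub_eq_zero.mp h])
  have hsum := sum_div_eq_zero_of_residue_ratio v ι hv (d := d) Finset.univ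
    ![(p₂ : ℂ) ^ 2, (q₂ : ℂ) ^ 2, -(p₄ : ℂ) ^ 2, -(q₄ : ℂ) ^ 2] ![c, 1 - c, c, 1 - c]
    ![w₂ - w₁, w₃ - w₂, w₄ - w₁, w₃ - w₄] ![z₂ - z₁, z₃ - z₂, z₁ - z₄, z₄ - z₃]
    (by simp [Fin.forall_fin_succ, h₁₂, h₂₃, ← h₁₄, ← h₄₃, ← mul_neg])
    (by simp [Fin.forall_fin_succ, hc₀, hc₁])
    (by
      rw [RingHom.map_sub, RingHom.map_one] at r₂₃ r₄₃
      simpa [Fin.forall_fin_succ] using ⟨r₁₂, r₂₃, r₁₄, r₄₃⟩)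
    (by simp [Fin.sum_univ_four])
  have hrel : ((p₂ ^ 2 - p₄ ^ 2 : ℝ) : ℂ) / c + ((q₂ ^ 2 - q₄ ^ 2 : ℝ) : ℂ) / (1 - c) = 0 := by
    rw [← hsum]
    simp only [Fin.sum_univ_four, Matrix.cons_val]
    push_cast
    ring
  obtain ⟨hp, hq⟩ := eq_zero_and_eq_zero_of_div_add_div_one_sub hc hrel
  exact ⟨(sq_eq_sq₀ hp₂ hp₄).mp (sub_eq_zero.mp hp), (sq_eq_sq₀ hq₂ hq₄).mp (sub_eq_zero.mp hq)⟩

end FourCycle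

section IsotropicCoordinates

variable {V F : Type*} [Field F] (ι : ℂ →+* F) (x y : V → F)

/-- The isotropic coordinate `x + iy`; its conjugate `x - iy` is `isotropicCoord ι x (-y)`. Squared
distances are products of differences of these two coordinates. -/
def isotropicCoord (u : V) : F := x u + ι Complex.I * y u

theorem Wmap_eq_isotropicCoord_sub (u v : V) :
    Wmap ι x y u v = isotropicCoord ι x y v - isotropicCoord ι x y u := by
  simp only [Wmap, isotropicCoord]
  ring

theorem isotropicCoord_sub_mul_sub (u v : V) :
    (isotropicCoord ι x y v - isotropicCoord ι x y u) *
      (isotropicCoord ι x (-y) v - isotropicCoord ι x (-y) u)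
      = (x u - x v) ^ 2 + (y u - y v) ^ 2 := by
  have hI : ι Complex.I * ι Complex.I = -1 := by
    rw [← map_mul, Complex.I_mul_I, map_neg, map_one]
  simp only [isotropicCoord, Pi.neg_apply]
  linear_combination (-(y v - y u) ^ 2) * hI

theorem lt_map_isotropicCoord_sub_of_red_walk {Γ : Type*} [AddCommGroup Γ] [LinearOrder Γ]
    [IsOrderedAddMonoid Γ] {ν : F → Γ}
    {map_mul : ∀ a b : F, a ≠ 0 → b ≠ 0 → ν (a * b) = ν a + ν b}
    {map_add : ∀ a b : F, a ≠ 0 → b ≠ 0 → a + b ≠ 0 → min (ν a) (ν b) ≤ ν (a + b)}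
    {G : SimpleGraph V} {α : Γ} {u v : V}
    (h : ∃ P : G.Walk u v, ∀ e ∈ P.edges, ∀ a b : V, e = s(a, b) → α < ν (Wmap ι x y a b)) :
    (α : WithTop Γ) < addValuationOfFun ν map_mul map_add
      (isotropicCoord ι x y v - isotropicCoord ι x y u) := by
  obtain ⟨P, hP⟩ := h
  refine lt_map_sub_of_walk _ _ WithTop.coe_ne_top P fun a b hab ↦ ?_
  rw [← Wmap_eq_isotropicCoord_sub]
  exact coe_lt_addValuationOfFun (hP _ hab a b rfl)

end IsotropicCoordinates

theorem blue_triangle_blue_cycle_degenerate_or_deltoid_general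
    {V F Γ : Type*} [Field F] [AddCommGroup Γ] [LinearOrder Γ] [IsOrderedAddMonoid Γ]
    (G : SimpleGraph V) (lam : Sym2 V → ℝ)
    (ι : ℂ →+* F) (x y : V → F) (ν : F → Γ) (α : Γ)
    (hpos : ∀ e ∈ G.edgeSet, 0 < lam e)
    (hedge : ∀ ⦃u v : V⦄, G.Adj u v →
      (x u - x v) ^ 2 + (y u - y v) ^ 2 = (ι ((lam s(u, v) : ℝ) : ℂ)) ^ 2)
    (hν_mul : ∀ a b : F, a ≠ 0 → b ≠ 0 → ν (a * b) = ν a + ν b)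
    (hν_add : ∀ a b : F, a ≠ 0 → b ≠ 0 → a + b ≠ 0 → min (ν a) (ν b) ≤ ν (a + b))
    (hν_triv : ∀ c : ℂ, c ≠ 0 → ν (ι c) = 0)
    (u₁ u₂ u₃ v₁ v₂ v₃ v₄ : V)
    (hu12 : G.Adj u₁ u₂) (hu23 : G.Adj u₂ u₃) (hu13 : G.Adj u₁ u₃)
    (hv12 : G.Adj v₁ v₂) (hv23 : G.Adj v₂ v₃) (hv34 : G.Adj v₃ v₄) (hv41 : G.Adj v₄ v₁)
    (hbu13 : ν (Wmap ι x y u₁ u₃) ≤ α)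
    (hP1 : ∃ P : G.Walk u₁ v₁, ∀ e ∈ P.edges, ∀ a b : V, e = s(a, b) →
      α < ν (Wmap ι x y a b))
    (hP3 : ∃ P : G.Walk u₃ v₃, ∀ e ∈ P.edges, ∀ a b : V, e = s(a, b) →
      α < ν (Wmap ι x y a b))
    (hP2 : ∃ P : G.Walk u₂ v₂, ∀ e ∈ P.edges, ∀ a b : V, e = s(a, b) →
      α < ν (Wmap ι x y a b))
    (hP4 : ∃ P : G.Walk u₂ v₄, ∀ e ∈ P.edges, ∀ a b : V, e = s(a, b) →
      α < ν (Wmap ι x y a b))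
    (t1 : lam s(u₁, u₂) ≤ lam s(u₁, u₃) + lam s(u₂, u₃))
    (t2 : lam s(u₁, u₃) ≤ lam s(u₁, u₂) + lam s(u₂, u₃))
    (t3 : lam s(u₂, u₃) ≤ lam s(u₁, u₂) + lam s(u₁, u₃)) :
    (lam s(u₁, u₂) = lam s(u₁, u₃) + lam s(u₂, u₃) ∨
     lam s(u₁, u₃) = lam s(u₁, u₂) + lam s(u₂, u₃) ∨
     lam s(u₂, u₃) = lam s(u₁, u₂) + lam s(u₁, u₃)) ∨
    (lam s(v₁, v₂) = lam s(v₁, v₄) ∧ lam s(v₂, v₃) = lam s(v₃, v₄)) := by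
  refine or_iff_not_imp_left.mpr fun hdeg ↦ ?_
  push Not at hdeg
  obtain ⟨hne₁₂, hne₁₃, hne₂₃⟩ := hdeg
  let v := addValuationOfFun ν hν_mul hν_add
  let w := isotropicCoord ι x y
  let z := isotropicCoord ι x (-y)
  have hv : ∀ c, c ≠ 0 → v (ι c) = 0 := fun c hc ↦ by
    simp [v, addValuationOfFun_of_ne_zero ((map_ne_zero ι).mpr hc), hν_triv c hc]
  have hlen : ∀ {a b}, G.Adj a b → (w b - w a) * (z b - z a) = ι (lam s(a, b)) ^ 2 :=
    fun h ↦ (isotropicCoord_sub_mul_sub ι x y _ _).trans (hedge h)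
  have hw₁₃ : w u₃ - w u₁ ≠ 0 := left_ne_zero_of_mul <| hlen hu13 ▸ pow_ne_zero 2
    ((map_ne_zero ι).mpr (Complex.ofReal_ne_zero.mpr (hpos _ hu13).ne'))
  have hblue : v (w u₃ - w u₁) ≤ α := by
    rw [addValuationOfFun_of_ne_zero hw₁₃, ← Wmap_eq_isotropicCoord_sub]
    exact mod_cast hbu13
  have hred : ∀ {a b}, (∃ P : G.Walk a b, ∀ e ∈ P.edges, ∀ a b, e = s(a, b) →
      α < ν (Wmap ι x y a b)) → v (w u₃ - w u₁) < v (w b - w a) :=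
    fun h ↦ hblue.trans_lt (lt_map_isotropicCoord_sub_of_red_walk ι x y h)
  obtain ⟨c, hc, hc₁₂, hc₂₃⟩ := exists_nonreal_ratio_of_triangle ι (hlen hu12) (hlen hu23)
    (hlen hu13) (t1.lt_of_ne hne₁₂) (t3.lt_of_ne hne₂₃) (t2.lt_of_ne hne₁₃)
  rw [Sym2.eq_swap (a := v₃)]
  exact deltoid_of_residue_ratio v ι hv (hpos _ hv12).le (hpos _ hv23).le (hpos _ hv41.symm).le
    (hpos _ hv34.symm).le (hlen hv12) (hlen hv23) (hlen hv41.symm) (hlen hv34.symm) hc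
    (hc₁₂ ▸ zero_lt_map_div_sub_div v (hred hP1) (hred hP2))
    (hc₂₃ ▸ zero_lt_map_div_sub_div v (hred hP2) (hred hP3))
    (hc₁₂ ▸ zero_lt_map_div_sub_div v (hred hP1) (hred hP4))
    (hc₂₃ ▸ zero_lt_map_div_sub_div v (hred hP4) (hred hP3))

/-- In the valuation setting, given a blue 3-cycle `(u₁,u₂,u₃)` and a blue 4-cycle
`(v₁,v₂,v₃,v₄)` with `u₁∼v₁`, `u₃∼v₃` red-connected and `u₂, v₂, v₄` in one red
connected subgraph, either the triangle is degenerate or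
`λ(v₁v₂)=λ(v₁v₄)` and `λ(v₂v₃)=λ(v₃v₄)`. -/
theorem blue_triangle_blue_cycle_degenerate_or_deltoid
    {V F : Type*} [Fintype V] [Field F] (G : SimpleGraph V) (lam : Sym2 V → ℝ)
    (ι : ℂ →+* F) (x y : V → F) (ν : F → ℤ) (α : ℤ)
    (hpos : ∀ e ∈ G.edgeSet, 0 < lam e)
    (hedge : ∀ ⦃u v : V⦄, G.Adj u v →
      (x u - x v) ^ 2 + (y u - y v) ^ 2 = (ι ((lam s(u, v) : ℝ) : ℂ)) ^ 2)
    (hν_mul : ∀ a b : F, a ≠ 0 → b ≠ 0 → ν (a * b) = ν a + ν b)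
    (hν_add : ∀ a b : F, a ≠ 0 → b ≠ 0 → a + b ≠ 0 → min (ν a) (ν b) ≤ ν (a + b))
    (hν_triv : ∀ c : ℂ, c ≠ 0 → ν (ι c) = 0)
    (u₁ u₂ u₃ v₁ v₂ v₃ v₄ : V)
    (hu12 : G.Adj u₁ u₂) (hu23 : G.Adj u₂ u₃) (hu13 : G.Adj u₁ u₃)
    (hv12 : G.Adj v₁ v₂) (hv23 : G.Adj v₂ v₃) (hv34 : G.Adj v₃ v₄) (hv41 : G.Adj v₄ v₁)
    (hv13 : v₁ ≠ v₃) (hv24 : v₂ ≠ v₄)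
    (hbu12 : ν (Wmap ι x y u₁ u₂) ≤ α) (hbu23 : ν (Wmap ι x y u₂ u₃) ≤ α)
    (hbu13 : ν (Wmap ι x y u₁ u₃) ≤ α)
    (hbv12 : ν (Wmap ι x y v₁ v₂) ≤ α) (hbv23 : ν (Wmap ι x y v₂ v₃) ≤ α)
    (hbv34 : ν (Wmap ι x y v₃ v₄) ≤ α) (hbv41 : ν (Wmap ι x y v₄ v₁) ≤ α)
    (hP1 : ∃ P : G.Walk u₁ v₁, ∀ e ∈ P.edges, ∀ a b : V, e = s(a, b) →
      α < ν (Wmap ι x y a b))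
    (hP3 : ∃ P : G.Walk u₃ v₃, ∀ e ∈ P.edges, ∀ a b : V, e = s(a, b) →
      α < ν (Wmap ι x y a b))
    (hP2 : ∃ P : G.Walk u₂ v₂, ∀ e ∈ P.edges, ∀ a b : V, e = s(a, b) →
      α < ν (Wmap ι x y a b))
    (hP4 : ∃ P : G.Walk u₂ v₄, ∀ e ∈ P.edges, ∀ a b : V, e = s(a, b) →
      α < ν (Wmap ι x y a b))
    (t1 : lam s(u₁, u₂) ≤ lam s(u₁, u₃) + lam s(u₂, u₃))
    (t2 : lam s(u₁, u₃) ≤ lam s(u₁, u₂) + lam s(u₂, u₃))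
    (t3 : lam s(u₂, u₃) ≤ lam s(u₁, u₂) + lam s(u₁, u₃)) :
    (lam s(u₁, u₂) = lam s(u₁, u₃) + lam s(u₂, u₃) ∨
     lam s(u₁, u₃) = lam s(u₁, u₂) + lam s(u₂, u₃) ∨
     lam s(u₂, u₃) = lam s(u₁, u₂) + lam s(u₁, u₃)) ∨
    (lam s(v₁, v₂) = lam s(v₁, v₄) ∧ lam s(v₂, v₃) = lam s(v₃, v₄)) := by
  exact blue_triangle_blue_cycle_degenerate_or_deltoid_general G lam ι x y ν α hpos hedge hν_mul
    hν_add hν_triv u₁ u₂ u₃ v₁ v₂ v₃ v₄ hu12 hu23 hu13 hv12 hv23 hv34 hv41 hbu13 hP1 hP3 hP2 hP4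
    t1 t2 t3
end
end

section
/- The graph Q₁ has exactly 24 NAC-colorings (equivalently, exactly 12 NAC-colorings up to conjugation). -/
/-- A NAC-coloring: a surjective 2-coloring (`true` = red, `false` = blue) of the edges
such that every cycle is monochromatic or contains at least two edges of each color. -/
def IsNACColoring {V : Type*} (G : SimpleGraph V) (δ : G.edgeSet → Bool) : Prop :=
  (∃ e, δ e = true) ∧ (∃ e, δ e = false) ∧
  ∀ ⦃u : V⦄ (W : G.Walk u u), W.IsCycle →
    (∀ e : G.edgeSet, (e : Sym2 V) ∈ W.edges → δ e = true) ∨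
    (∀ e : G.edgeSet, (e : Sym2 V) ∈ W.edges → δ e = false) ∨
    (2 ≤ (W.edges.attach.filter
        (fun e => δ ⟨e.1, W.edges_subset_edgeSet e.2⟩)).length ∧
     2 ≤ (W.edges.attach.filter
        (fun e => !(δ ⟨e.1, W.edges_subset_edgeSet e.2⟩))).length)

/-- The graph `Q₁`, with vertices `0,…,6` standing for `1,…,7`. -/
def Q1 : SimpleGraph (Fin 7) :=
  SimpleGraph.fromEdgeSet
    {s(0, 2), s(0, 3), s(0, 4), s(1, 2), s(1, 3), s(1, 5),
     s(2, 6), s(3, 6), s(4, 5), s(4, 6), s(5, 6)}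

/-!
A surjective coloring is a NAC-coloring iff the monochromatic components are induced: an edge whose
ends are joined by a path of one color has that color. Two consequences for short cycles are that
triangles are monochromatic and that quadrilaterals have an even number of red edges.

In `Q₁` the vertices `4, 5, 6` form a triangle, which by conjugation may be taken blue. Each vertex
`i` among `0, 1, 2, 3` has exactly one edge to this triangle; give `i` the color of that edge as a
label and give the triangle the label blue. The quadrilaterals with an edge in the triangle force
an edge to be red exactly when its ends have different labels, so a NAC-coloring is a cut. Of the
`2 ^ 4` labellings the zero one is not surjective, and the pentagons `0 2 1 5 4` and `0 3 1 5 4`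
exclude the three in which `0` and `1` are red but `2` or `3` is not. The other twelve all work.
-/

section General

variable {V : Type*} {G : SimpleGraph V} {δ : G.edgeSet → Bool} {u v w x y : V} {b : Bool}

/-- The list of edge colors met along a walk. It is read off from the darts, which unlike the
entries of `W.edges` carry their own adjacency proof. -/
def walkColors (δ : G.edgeSet → Bool) (W : G.Walk u v) : List Bool :=
  W.darts.map fun d => δ ⟨d.edge, d.edge_mem⟩

/-- The spanning subgraph formed by the edges of color `b`. -/
def colorClass (δ : G.edgeSet → Bool) (b : Bool) : SimpleGraph V :=
  SimpleGraph.fromEdgeSet (Subtype.val '' (δ ⁻¹' {b}))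

/-- The conjugate coloring, which swaps red and blue. -/
def conjColoring (δ : G.edgeSet → Bool) : G.edgeSet → Bool := fun e => !δ e

/-- The coloring in which the red edges form the cut between the vertices labelled `true` and
those labelled `false`. -/
def cutColoring (G : SimpleGraph V) (f : V → Bool) (e : G.edgeSet) : Bool :=
  Sym2.lift ⟨fun u v => xor (f u) (f v), fun u v => Bool.xor_comm (f u) (f v)⟩ e.1

theorem colorClass_adj :
    (colorClass δ b).Adj u v ↔ ∃ h : G.Adj u v, δ ⟨s(u, v), h⟩ = b := by
  simp only [colorClass, SimpleGraph.fromEdgeSet_adj, Set.mem_image, Subtype.exists,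
    Set.mem_preimage, Set.mem_singleton_iff]
  constructor
  · rintro ⟨⟨e, he, hb, rfl⟩, -⟩
    exact ⟨he, hb⟩
  · rintro ⟨h, hb⟩
    exact ⟨⟨s(u, v), h, hb, rfl⟩, h.ne⟩

theorem colorClass_le : colorClass δ b ≤ G := fun _ _ h => (colorClass_adj.1 h).1

theorem walkColors_cons (h : G.Adj u v) (W : G.Walk v w) :
    walkColors δ (.cons h W) = δ ⟨s(u, v), h⟩ :: walkColors δ W := rfl

theorem edges_attach_map_color (W : G.Walk u v) :
    W.edges.attach.map (fun e => δ ⟨e.1, W.edges_subset_edgeSet e.2⟩) = walkColors δ W := by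
  have edges_eq : W.edges.attach.map
        (fun e => (⟨e.1, W.edges_subset_edgeSet e.2⟩ : G.edgeSet)) =
      W.darts.map fun d => ⟨d.edge, d.edge_mem⟩ := by
    apply List.map_injective_iff.2 Subtype.val_injective
    simp only [List.map_map, Function.comp_def, List.attach_map_subtype_val]
    rfl
  simpa [walkColors, Function.comp_def] using congrArg (List.map δ) edges_eq

theorem forall_mem_edges_color_eq_iff (W : G.Walk u v) :
    (∀ e : G.edgeSet, (e : Sym2 V) ∈ W.edges → δ e = b) ↔ (walkColors δ W).count (!b) = 0 := by
  rw [← edges_attach_map_color, List.count_eq_zero]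
  simp only [List.mem_map, List.mem_attach, true_and, Subtype.exists, not_exists, Bool.not_eq_not]
  exact ⟨fun h e he => by simp [h ⟨e, W.edges_subset_edgeSet he⟩ he],
    fun h e he => by simpa using h e.1 he⟩

theorem isNACColoring_iff_count_ne_one :
    IsNACColoring G δ ↔ Function.Surjective δ ∧
      ∀ ⦃u : V⦄ (W : G.Walk u u), W.IsCycle → ∀ b, (walkColors δ W).count b ≠ 1 := by
  rw [IsNACColoring, ← and_assoc, Function.Surjective, Bool.forall_bool, and_comm (b := ∃ e, _)]
  refine and_congr_right fun _ => forall₃_congr fun u W hW => ?_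
  have red_length : (W.edges.attach.filter
      fun e => δ ⟨e.1, W.edges_subset_edgeSet e.2⟩).length = (walkColors δ W).count true := by
    rw [← edges_attach_map_color, List.count, List.countP_map, List.countP_eq_length_filter]
    simp [Function.comp_def]
  have blue_length : (W.edges.attach.filter
      fun e => !δ ⟨e.1, W.edges_subset_edgeSet e.2⟩).length = (walkColors δ W).count false := by
    rw [← edges_attach_map_color, List.count, List.countP_map, List.countP_eq_length_filter]
    simp [Function.comp_def]
  have count_add_count : (walkColors δ W).count true + (walkColors δ W).count false = W.length := by
    simp [List.count_true_add_count_false, walkColors]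
  have three_le := hW.three_le_length
  rw [forall_mem_edges_color_eq_iff, forall_mem_edges_color_eq_iff, red_length,
    blue_length, Bool.forall_bool]
  simp only [Bool.not_true, Bool.not_false]
  omega

theorem IsNACColoring.conj (hδ : IsNACColoring G δ) : IsNACColoring G (conjColoring δ) := by
  rw [isNACColoring_iff_count_ne_one] at hδ ⊢
  refine ⟨Bool.involutive_not.surjective.comp hδ.1, fun u W hW b => ?_⟩
  have count_conj : (walkColors (conjColoring δ) W).count b = (walkColors δ W).count (!b) := by
    simp only [walkColors, conjColoring, List.count, List.countP_map]
    congr 1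
    ext d
    simp
  rw [count_conj]
  exact hδ.2 W hW (!b)

theorem reachable_colorClass_of_count_eq_zero (W : G.Walk u v)
    (hW : (walkColors δ W).count (!b) = 0) : (colorClass δ b).Reachable u v := by
  induction W with
  | nil => rfl
  | cons h W ih =>
    rw [walkColors_cons, List.count_eq_zero, List.mem_cons, not_or, ← List.count_eq_zero] at hW
    have h_color : δ ⟨s(_, _), h⟩ = b := by simpa using Ne.symm hW.1
    exact (colorClass_adj.2 ⟨h, h_color⟩).reachable.trans (ih hW.2)

theorem not_reachable_colorClass_of_count_eq_one
    (hδ : ∀ ⦃u v : V⦄ (h : G.Adj u v), (colorClass δ b).Reachable u v → δ ⟨s(u, v), h⟩ = b)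
    (W : G.Walk u v) (hW : (walkColors δ W).count (!b) = 1) :
    ¬ (colorClass δ b).Reachable u v := by
  induction W with
  | nil => simp [walkColors] at hW
  | cons h W ih =>
    rw [walkColors_cons] at hW
    intro huv
    by_cases h_color : δ ⟨s(_, _), h⟩ = b
    · refine ih (by simpa [h_color] using hW) (.trans ?_ huv)
      exact (colorClass_adj.2 ⟨h, h_color⟩).reachable.symm
    · have count_eq_zero : (walkColors δ W).count (!b) = 0 := by
        simpa [Bool.eq_not.2 h_color] using hW
      have tail_reachable := reachable_colorClass_of_count_eq_zero W count_eq_zero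
      exact h_color (hδ h (huv.trans tail_reachable.symm))

theorem IsNACColoring.color_eq_of_reachable (hδ : IsNACColoring G δ) (h : G.Adj u v)
    (huv : (colorClass δ b).Reachable u v) : δ ⟨s(u, v), h⟩ = b := by
  by_contra h_color
  obtain ⟨P, hP⟩ := huv.symm.exists_isPath
  have path_color : ∀ e : G.edgeSet, (e : Sym2 V) ∈ (P.mapLe colorClass_le).edges → δ e = b := by
    rintro ⟨e, he⟩ heP
    rw [SimpleGraph.Walk.edges_mapLe_eq_edges] at heP
    have he_color := P.edges_subset_edgeSet heP
    induction e with | _ x y => exact (colorClass_adj.1 he_color).2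
  have isCycle : (SimpleGraph.Walk.cons h (P.mapLe colorClass_le)).IsCycle :=
    (SimpleGraph.Walk.cons_isCycle_iff _ h).2
      ⟨hP.mapLe colorClass_le, fun he => h_color (path_color ⟨_, h⟩ he)⟩
  apply (isNACColoring_iff_count_ne_one.1 hδ).2 _ isCycle !b
  rw [walkColors_cons, Bool.eq_not.2 h_color, List.count_cons_self,
    (forall_mem_edges_color_eq_iff _).1 path_color]

theorem isNACColoring_iff_reachable :
    IsNACColoring G δ ↔ Function.Surjective δ ∧ ∀ (b : Bool) ⦃u v : V⦄ (h : G.Adj u v),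
      (colorClass δ b).Reachable u v → δ ⟨s(u, v), h⟩ = b := by
  refine ⟨fun hδ => ⟨(isNACColoring_iff_count_ne_one.1 hδ).1,
    fun b u v h => hδ.color_eq_of_reachable h⟩, fun ⟨hsurj, hδ⟩ => ?_⟩
  refine isNACColoring_iff_count_ne_one.2 ⟨hsurj, fun u W _ b hb => ?_⟩
  refine not_reachable_colorClass_of_count_eq_one (hδ !b) W ?_ .rfl
  rwa [Bool.not_not]

theorem eq_of_reachable_colorClass {α : Type*} {f : V → α}
    (hf : ∀ ⦃u v : V⦄ (h : G.Adj u v), δ ⟨s(u, v), h⟩ = b → f u = f v)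
    (huv : (colorClass δ b).Reachable u v) : f u = f v := by
  obtain ⟨W⟩ := huv
  induction W with
  | nil => rfl
  | cons h _ ih =>
    obtain ⟨hG, h_color⟩ := colorClass_adj.1 h
    exact (hf hG h_color).trans ih

theorem isNACColoring_cutColoring {α : Type*} {f : V → Bool} {g : V → α}
    (hsurj : Function.Surjective (cutColoring G f))
    (hg : ∀ ⦃u v : V⦄, G.Adj u v → (g u = g v ↔ f u ≠ f v)) :
    IsNACColoring G (cutColoring G f) := by
  refine isNACColoring_iff_reachable.2 ⟨hsurj, ?_⟩
  rintro (_ | _) u v h huv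
  · have f_eq : f u = f v := eq_of_reachable_colorClass (by simp [cutColoring]) huv
    simpa [cutColoring] using f_eq
  · have g_eq : g u = g v :=
      eq_of_reachable_colorClass (by simp +contextual [cutColoring, hg]) huv
    simpa [cutColoring] using (hg h).1 g_eq

namespace IsNACColoring

theorem color_eq_iff_connectedComponentMk_eq (hδ : IsNACColoring G δ) (h : G.Adj u v) (b : Bool) :
    δ ⟨s(u, v), h⟩ = b ↔
      (colorClass δ b).connectedComponentMk u = (colorClass δ b).connectedComponentMk v := by
  rw [SimpleGraph.ConnectedComponent.eq]
  exact ⟨fun h_color => (colorClass_adj.2 ⟨h, h_color⟩).reachable, hδ.color_eq_of_reachable h⟩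

theorem color_eq_of_triangle (hδ : IsNACColoring G δ)
    (huv : G.Adj u v) (huw : G.Adj u w) (hvw : G.Adj v w) :
    δ ⟨s(u, v), huv⟩ = δ ⟨s(u, w), huw⟩ ∧ δ ⟨s(u, v), huv⟩ = δ ⟨s(v, w), hvw⟩ := by
  obtain ⟨huv_blue, huv_red⟩ := Bool.forall_bool.1 (hδ.color_eq_iff_connectedComponentMk_eq huv)
  obtain ⟨huw_blue, huw_red⟩ := Bool.forall_bool.1 (hδ.color_eq_iff_connectedComponentMk_eq huw)
  obtain ⟨hvw_blue, hvw_red⟩ := Bool.forall_bool.1 (hδ.color_eq_iff_connectedComponentMk_eq hvw)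
  generalize δ ⟨s(u, v), huv⟩ = cuv, δ ⟨s(u, w), huw⟩ = cuw, δ ⟨s(v, w), hvw⟩ = cvw at *
  -- Two of the three edges share a color, and together they join the ends of the third.
  grind

theorem color_eq_xor_of_quadrilateral (hδ : IsNACColoring G δ)
    (huv : G.Adj u v) (hvw : G.Adj v w) (hux : G.Adj u x) (hxw : G.Adj x w) :
    δ ⟨s(u, v), huv⟩ = xor (δ ⟨s(u, x), hux⟩) (xor (δ ⟨s(x, w), hxw⟩) (δ ⟨s(v, w), hvw⟩)) := by
  obtain ⟨huv_blue, huv_red⟩ := Bool.forall_bool.1 (hδ.color_eq_iff_connectedComponentMk_eq huv)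
  obtain ⟨hvw_blue, hvw_red⟩ := Bool.forall_bool.1 (hδ.color_eq_iff_connectedComponentMk_eq hvw)
  obtain ⟨hux_blue, hux_red⟩ := Bool.forall_bool.1 (hδ.color_eq_iff_connectedComponentMk_eq hux)
  obtain ⟨hxw_blue, hxw_red⟩ := Bool.forall_bool.1 (hδ.color_eq_iff_connectedComponentMk_eq hxw)
  generalize δ ⟨s(u, v), huv⟩ = cuv, δ ⟨s(v, w), hvw⟩ = cvw, δ ⟨s(u, x), hux⟩ = cux,
    δ ⟨s(x, w), hxw⟩ = cxw at *
  -- With an odd number of red edges, three edges of one color would join the ends of the fourth.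
  grind

theorem color_eq_of_pentagon (hδ : IsNACColoring G δ)
    {huv : G.Adj u v} {hvw : G.Adj v w} {hwx : G.Adj w x} {hxy : G.Adj x y} (huy : G.Adj u y)
    (huv_color : δ ⟨s(u, v), huv⟩ = b) (hvw_color : δ ⟨s(v, w), hvw⟩ = b)
    (hwx_color : δ ⟨s(w, x), hwx⟩ = b) (hxy_color : δ ⟨s(x, y), hxy⟩ = b) :
    δ ⟨s(u, y), huy⟩ = b := by
  rw [hδ.color_eq_iff_connectedComponentMk_eq] at huv_color hvw_color hwx_color hxy_color ⊢
  exact huv_color.trans (hvw_color.trans (hwx_color.trans hxy_color))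

end IsNACColoring

theorem conjColoring_involutive : Function.Involutive (conjColoring (G := G)) :=
  fun δ => funext fun e => Bool.not_not (δ e)

theorem encard_isNACColoring_eq_two_mul (e : G.edgeSet) :
    {δ | IsNACColoring G δ}.encard = 2 * {δ | IsNACColoring G δ ∧ δ e = false}.encard := by
  set blue := {δ | IsNACColoring G δ ∧ δ e = false}
  have image_conj : conjColoring '' blue = {δ | IsNACColoring G δ ∧ δ e = true} := by
    rw [conjColoring_involutive.image_eq_preimage_symm]
    ext δ
    exact and_congr ⟨fun hδ => conjColoring_involutive δ ▸ hδ.conj, IsNACColoring.conj⟩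
      (by simp [conjColoring])
  have union_eq : {δ | IsNACColoring G δ} = blue ∪ conjColoring '' blue := by
    rw [image_conj]
    ext δ
    cases h : δ e <;> simp [blue, h]
  have disjoint : Disjoint blue (conjColoring '' blue) := by
    rw [image_conj, Set.disjoint_left]
    rintro δ ⟨-, h_blue⟩ ⟨-, h_red⟩
    simp [h_blue] at h_red
  rw [union_eq, Set.encard_union_eq disjoint, conjColoring_involutive.injective.encard_image,
    two_mul]

end General

section Q1

instance : DecidableRel Q1.Adj := by
  unfold Q1
  infer_instance

/-- The label of a vertex outside the triangle `4, 5, 6` is the color of its edge to the triangle;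
the triangle itself has label `false`. -/
def triangleLabels (δ : Q1.edgeSet → Bool) : Fin 7 → Bool :=
  ![δ ⟨s(0, 4), by decide⟩, δ ⟨s(1, 5), by decide⟩, δ ⟨s(2, 6), by decide⟩,
    δ ⟨s(3, 6), by decide⟩, false, false, false]

/-- The vertex labellings whose cuts are the NAC-colorings of `Q₁` with blue triangle `4, 5, 6`. -/
def nacLabels : Finset (Fin 7 → Bool) :=
  {f | (f 4 = false ∧ f 5 = false ∧ f 6 = false) ∧ f ≠ (fun _ => false) ∧
    (f 0 = true → f 1 = true → f 2 = true ∧ f 3 = true)}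

theorem card_nacLabels : nacLabels.card = 12 := by
  decide +kernel

theorem triangleLabels_cutColoring {f : Fin 7 → Bool} (hf : f ∈ nacLabels) :
    triangleLabels (cutColoring Q1 f) = f := by
  obtain ⟨⟨h4, h5, h6⟩, -⟩ := (Finset.mem_filter_univ f).1 hf
  ext v
  fin_cases v <;> simp [triangleLabels, cutColoring, h4, h5, h6]

/-- Labels for the components of the red edges of the cut of `f ∈ nacLabels`: the components of
`6`, `4` and `5` are labelled `0`, `1` and `2`, and the remaining one, if any, `3`. -/
def redComponent (f : Fin 7 → Bool) : Fin 7 → Fin 4 :=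
  let offTriangle : Fin 4 := if f 0 then 1 else if f 1 then 2 else 3
  ![if f 0 then 1 else 0, if f 1 then 2 else 0, if f 2 then 0 else offTriangle,
    if f 3 then 0 else offTriangle, 1, 2, 0]

theorem redComponent_eq_iff : ∀ f ∈ nacLabels, ∀ u v : Fin 7, Q1.Adj u v →
    (redComponent f u = redComponent f v ↔ f u ≠ f v) := by
  decide +kernel

theorem cutColoring_Q1_surjective {f : Fin 7 → Bool} (hf : f ∈ nacLabels) :
    Function.Surjective (cutColoring Q1 f) := by
  obtain ⟨⟨h4, h5, -⟩, f_ne, -⟩ := (Finset.mem_filter_univ f).1 hf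
  refine Bool.forall_bool.2 ⟨⟨⟨s(4, 5), by decide⟩, by simp [cutColoring, h4, h5]⟩, ?_⟩
  by_contra! no_red
  rw [← triangleLabels_cutColoring hf] at f_ne
  refine f_ne (funext fun v => ?_)
  fin_cases v <;> simp [triangleLabels, no_red]

theorem isNACColoring_cutColoring_Q1 {f : Fin 7 → Bool} (hf : f ∈ nacLabels) :
    IsNACColoring Q1 (cutColoring Q1 f) :=
  isNACColoring_cutColoring (cutColoring_Q1_surjective hf) (redComponent_eq_iff f hf)

theorem eq_cutColoring_triangleLabels {δ : Q1.edgeSet → Bool} (hδ : IsNACColoring Q1 δ)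
    (h45 : δ ⟨s(4, 5), by decide⟩ = false) : δ = cutColoring Q1 (triangleLabels δ) := by
  obtain ⟨h46, h56⟩ := hδ.color_eq_of_triangle (u := 4) (v := 5) (w := 6)
    (by decide) (by decide) (by decide)
  replace h46 := h46.symm.trans h45
  replace h56 := h56.symm.trans h45
  have h02 := hδ.color_eq_xor_of_quadrilateral (u := 0) (v := 2) (w := 6) (x := 4)
    (by decide) (by decide) (by decide) (by decide)
  have h03 := hδ.color_eq_xor_of_quadrilateral (u := 0) (v := 3) (w := 6) (x := 4)
    (by decide) (by decide) (by decide) (by decide)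
  have h12 := hδ.color_eq_xor_of_quadrilateral (u := 1) (v := 2) (w := 6) (x := 5)
    (by decide) (by decide) (by decide) (by decide)
  have h13 := hδ.color_eq_xor_of_quadrilateral (u := 1) (v := 3) (w := 6) (x := 5)
    (by decide) (by decide) (by decide) (by decide)
  rw [h46, Bool.false_xor] at h02 h03
  rw [h56, Bool.false_xor] at h12 h13
  ext ⟨e, he⟩
  obtain ⟨rfl | rfl | rfl | rfl | rfl | rfl | rfl | rfl | rfl | rfl | rfl, -⟩ :=
    (SimpleGraph.edgeSet_fromEdgeSet _).subset he
  all_goals simp [cutColoring, triangleLabels, *]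

theorem triangleLabels_mem_nacLabels {δ : Q1.edgeSet → Bool} (hδ : IsNACColoring Q1 δ)
    (h45 : δ ⟨s(4, 5), by decide⟩ = false) : triangleLabels δ ∈ nacLabels := by
  have δ_eq := eq_cutColoring_triangleLabels hδ h45
  refine (Finset.mem_filter_univ _).2 ⟨⟨rfl, rfl, rfl⟩, fun labels_eq => ?_, fun h0 h1 => ?_⟩
  · obtain ⟨⟨⟨e, he⟩, he_red⟩, -⟩ := hδ
    rw [δ_eq, labels_eq] at he_red
    induction e with | _ u v => simp [cutColoring] at he_red
  have label_eq_true {v : Fin 7} (h0v : Q1.Adj 0 v) (h1v : Q1.Adj 1 v) :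
      triangleLabels δ v = true := by
    by_contra hv
    rw [Bool.not_eq_true] at hv
    have h40_red : δ ⟨s(4, 0), by decide⟩ = true := 
      (congrArg δ (Subtype.ext Sym2.eq_swap)).trans h0
    have h0v_red : δ ⟨s(0, v), h0v⟩ = true := by rw [δ_eq]; simp [cutColoring, h0, hv]
    have hv1_red : δ ⟨s(v, 1), h1v.symm⟩ = true := by rw [δ_eq]; simp [cutColoring, h1, hv]
    have h45_red : δ ⟨s(4, 5), by decide⟩ = true :=
      hδ.color_eq_of_pentagon _ h40_red h0v_red hv1_red h1
    exact Bool.false_ne_true (h45.symm.trans h45_red)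
  exact ⟨label_eq_true (by decide) (by decide), label_eq_true (by decide) (by decide)⟩

theorem encard_isNACColoring_Q1_blue_triangle :
    {δ | IsNACColoring Q1 δ ∧ δ ⟨s(4, 5), by decide⟩ = false}.encard = 12 := by
  have image_eq : {δ | IsNACColoring Q1 δ ∧ δ ⟨s(4, 5), by decide⟩ = false} =
      cutColoring Q1 '' nacLabels := by
    ext δ
    constructor
    · rintro ⟨hδ, h45⟩
      exact ⟨_, triangleLabels_mem_nacLabels hδ h45, (eq_cutColoring_triangleLabels hδ h45).symm⟩
    · rintro ⟨f, hf, rfl⟩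
      refine ⟨isNACColoring_cutColoring_Q1 hf, ?_⟩
      obtain ⟨⟨h4, h5, -⟩, -⟩ := (Finset.mem_filter_univ f).1 hf
      simp [cutColoring, h4, h5]
  have injOn : Set.InjOn (cutColoring Q1) nacLabels :=
    Set.LeftInvOn.injOn fun _ => triangleLabels_cutColoring
  rw [image_eq, injOn.encard_image, Set.encard_coe_eq_coe_finsetCard, card_nacLabels]
  rfl

end Q1

/-- The graph `Q₁` has exactly 24 NAC-colorings (12 up to conjugation). -/
theorem Q1_NAC_count :
    {δ : Q1.edgeSet → Bool | IsNACColoring Q1 δ}.ncard = 24 := by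
  rw [Set.ncard, encard_isNACColoring_eq_two_mul ⟨s(4, 5), by decide⟩,
    encard_isNACColoring_Q1_blue_triangle]
  rfl
end
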